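/- For each n ∈ N, there is an isomorphism of (N_n, N_n)-bimodules N_{n+1} ≅ (N_n ⊗_{N_{n-1}} N_n) ⊕ N_n, where N_{n+1} is viewed as an (N_n, N_n)-bimodule by restriction; the summand N_n maps in via the inclusion and the summand N_n ⊗_{N_{n-1}} N_n maps in via a ⊗ b ↦ a u_n b. -/

import Mathlib

/-- The defining relations of the nilcoxeter algebra `N_n`: the generators
`u_1, ..., u_{n-1}` (indexed here by `Fin (n-1)`) square to zero, distant generators
commute, and adjacent generators satisfy the braid relation. -/
inductive NilCoxeterRel (F : Type) [Field F] (n : ℕ) :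
    FreeAlgebra F (Fin (n - 1)) → FreeAlgebra F (Fin (n - 1)) → Prop
  | sq (i : Fin (n - 1)) :
      NilCoxeterRel F n (FreeAlgebra.ι F i * FreeAlgebra.ι F i) 0
  | comm (i j : Fin (n - 1)) (h : (i : ℕ) + 1 < j ∨ (j : ℕ) + 1 < i) :
      NilCoxeterRel F n (FreeAlgebra.ι F i * FreeAlgebra.ι F j)
        (FreeAlgebra.ι F j * FreeAlgebra.ι F i)
  | braid (i j : Fin (n - 1)) (h : (j : ℕ) = (i : ℕ) + 1) :
      NilCoxeterRel F n (FreeAlgebra.ι F i * FreeAlgebra.ι F j * FreeAlgebra.ι F i)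
        (FreeAlgebra.ι F j * FreeAlgebra.ι F i * FreeAlgebra.ι F j)

/-- The nilcoxeter algebra `N_n` over the field `F`. -/
abbrev NilCoxeter (F : Type) [Field F] (n : ℕ) := RingQuot (NilCoxeterRel F n)

/-- The generators `u_i` of the nilcoxeter algebra. -/
noncomputable def NilCoxeter.u (F : Type) [Field F] (n : ℕ) (i : Fin (n - 1)) :
    NilCoxeter F n :=
  RingQuot.mkAlgHom F (NilCoxeterRel F n) (FreeAlgebra.ι F i)

/-- The inclusion `N_n → N_{n+1}` sending each generator `u_i` to `u_i`. -/
noncomputable def NilCoxeter.incl (F : Type) [Field F] (n : ℕ) :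
    NilCoxeter F n →ₐ[F] NilCoxeter F (n + 1) :=
  RingQuot.liftAlgHom F
    ⟨FreeAlgebra.lift F
        (fun i => NilCoxeter.u F (n + 1) (Fin.castLE (Nat.sub_le n 1) i)), by
      rintro x y (⟨i⟩ | ⟨i, j, h⟩ | ⟨i, j, h⟩) <;>
        simp only [map_mul, map_zero, FreeAlgebra.lift_ι_apply]
      · have := RingQuot.mkAlgHom_rel F
          (NilCoxeterRel.sq (F := F) (n := n + 1) (Fin.castLE (Nat.sub_le n 1) i))
        simpa [NilCoxeter.u] using this
      · have := RingQuot.mkAlgHom_rel F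
          (NilCoxeterRel.comm (F := F) (n := n + 1) (Fin.castLE (Nat.sub_le n 1) i)
            (Fin.castLE (Nat.sub_le n 1) j) (by simpa using h))
        simpa [NilCoxeter.u] using this
      · have := RingQuot.mkAlgHom_rel F
          (NilCoxeterRel.braid (F := F) (n := n + 1) (Fin.castLE (Nat.sub_le n 1) i)
            (Fin.castLE (Nat.sub_le n 1) j) (by simpa using h))
        simpa [NilCoxeter.u] using this⟩

/-!
The descending words `u_m ⋯ u_{k+1}`, `0 ≤ k ≤ m`, form a basis of `N_{m+1}` as a left
`N_m`-module. They span because such a word times a generator on the right is zero, another such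
word, or a generator of `N_m` times the same word. The matrices over `N_m` recording these rules
satisfy the nilcoxeter relations themselves, hence define a representation of `N_{m+1}` on row
vectors; acting on the row vector of the empty word, it recovers the coefficients of an element,
which gives independence.

Since `u_{n+1}` commutes with `N_n`, the map `a ⊗ b ↦ a u_{n+1} b` is well defined. It sends
`a ⊗ u_n ⋯ u_{k+1}` to `a u_{n+1} u_n ⋯ u_{k+1}`. So the words of `N_{n+1}` over `N_n` become the
nonempty words of `N_{n+2}` over `N_{n+1}`, and the summand `N_{n+1}` supplies the multiples of the
empty word.
-/

/-- A sequence in a monoid with zero satisfying the nilcoxeter relations. The sequence is infinite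
so that no index bounds are needed; finite families are extended by zero. -/
structure IsNilCoxeterSeq {E : Type*} [MonoidWithZero E] (g : ℕ → E) : Prop where
  sq : ∀ j, g j * g j = 0
  comm : ∀ i j, i + 1 < j → Commute (g i) (g j)
  braid : ∀ j, g j * g (j + 1) * g j = g (j + 1) * g j * g (j + 1)

/-- The descending word `g (m - 1) * ⋯ * g k`, equal to `1` when `m ≤ k`. For the generators of
`N_{m+1}` and `k ≤ m` these are the minimal length representatives of the right cosets of `S_m` in
`S_{m+1}`. -/
def descWord {E : Type*} [Monoid E] (g : ℕ → E) (m k : ℕ) : E :=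
  ((List.Ico k m).map g).reverse.prod

section DescWord

variable {E : Type*}

lemma descWord_self [Monoid E] (g : ℕ → E) (m : ℕ) : descWord g m m = 1 := by
  simp [descWord]

lemma descWord_mul_descWord [Monoid E] (g : ℕ → E) {m l k : ℕ} (hkl : k ≤ l) (hlm : l ≤ m) :
    descWord g m l * descWord g l k = descWord g m k := by
  simp only [descWord, ← List.Ico.append_consecutive hkl hlm, List.map_append,
    List.reverse_append, List.prod_append]

lemma descWord_succ_self [Monoid E] (g : ℕ → E) (k : ℕ) : descWord g (k + 1) k = g k := by
  simp [descWord, List.Ico.succ_singleton]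

lemma descWord_succ_left [Monoid E] (g : ℕ → E) {m k : ℕ} (h : k ≤ m) :
    descWord g (m + 1) k = g m * descWord g m k := by
  rw [← descWord_mul_descWord g h m.le_succ, descWord_succ_self]

lemma descWord_succ_right [Monoid E] (g : ℕ → E) {m k : ℕ} (h : k < m) :
    descWord g m k = descWord g m (k + 1) * g k := by
  rw [← descWord_mul_descWord g k.le_succ h, descWord_succ_self]

lemma map_descWord {E' G : Type*} [Monoid E] [Monoid E'] [FunLike G E E'] [MonoidHomClass G E E']
    (f : G) {g : ℕ → E} {g' : ℕ → E'} {m : ℕ} (h : ∀ j < m, f (g j) = g' j) (k : ℕ) :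
    f (descWord g m k) = descWord g' m k := by
  simp only [descWord, map_list_prod, List.map_reverse, List.map_map]
  congr 2
  exact List.map_congr_left fun j hj => h j (List.Ico.mem.1 hj).2

lemma commute_descWord [Monoid E] {g : ℕ → E} {x : E} {m k : ℕ}
    (h : ∀ j, k ≤ j → j < m → Commute x (g j)) : Commute x (descWord g m k) :=
  Commute.list_prod_right _ _ fun y hy => by
    obtain ⟨j, hj, rfl⟩ := List.mem_map.1 (List.mem_reverse.1 hy)
    exact h j (List.Ico.mem.1 hj).1 (List.Ico.mem.1 hj).2

variable [MonoidWithZero E] {g : ℕ → E}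

lemma IsNilCoxeterSeq.descWord_mul_of_lt (hg : IsNilCoxeterSeq g) {m k j : ℕ} (hkj : k ≤ j)
    (hjm : j + 1 < m) : descWord g m k * g (j + 1) = g j * descWord g m k := by
  have hlow : Commute (g (j + 1)) (descWord g j k) :=
    commute_descWord fun i _ hi => (hg.comm i (j + 1) (by omega)).symm
  have hhigh : Commute (g j) (descWord g m (j + 2)) :=
    commute_descWord fun i hi _ => hg.comm j i (by omega)
  have hsplit : descWord g m k = descWord g m (j + 2) * (g (j + 1) * g j) * descWord g j k := by
    rw [← descWord_mul_descWord g hkj (by omega : j ≤ m), descWord_succ_right g (by omega),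
      descWord_succ_right g hjm, mul_assoc _ (g (j + 1))]
  calc descWord g m k * g (j + 1)
      = descWord g m (j + 2) * (g (j + 1) * g j * g (j + 1)) * descWord g j k := by
        rw [hsplit, mul_assoc, ← hlow.eq]; simp only [mul_assoc]
    _ = (descWord g m (j + 2) * g j) * (g (j + 1) * g j) * descWord g j k := by
        rw [← hg.braid]; simp only [mul_assoc]
    _ = g j * descWord g m k := by
        rw [← hhigh.eq, hsplit]; simp only [mul_assoc]

lemma IsNilCoxeterSeq.descWord_mul_self (hg : IsNilCoxeterSeq g) {m k : ℕ} (h : k < m) :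
    descWord g m k * g k = 0 := by
  rw [descWord_succ_right g h, mul_assoc, hg.sq, mul_zero]

lemma IsNilCoxeterSeq.descWord_mul_of_gt (hg : IsNilCoxeterSeq g) (m : ℕ) {k j : ℕ}
    (h : j + 1 < k) : descWord g m k * g j = g j * descWord g m k :=
  (commute_descWord fun i hi _ => hg.comm j i (by omega)).eq.symm

end DescWord

/-- The matrix of right multiplication by `g j` on the descending words `descWord g m k`, `k ≤ m`,
with coefficients on the left: for `j < m` and a nilcoxeter sequence `g`, row `k` expands
`descWord g m k * g j`. The subtractions are never truncated in the cases where they occur. -/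
def descMatrix {E : Type*} [Semiring E] (g : ℕ → E) (m j : ℕ) :
    Matrix (Fin (m + 1)) (Fin (m + 1)) E := fun k =>
  if (k : ℕ) < j then Pi.single k (g (j - 1))
  else if (k : ℕ) = j then 0
  else if (k : ℕ) = j + 1 then Pi.single ⟨k - 1, by omega⟩ 1
  else Pi.single k (g j)

section DescMatrix

open scoped Matrix

lemma vecMul_algebraMap {R E ι : Type*} [CommSemiring R] [Semiring E] [Algebra R E] [Fintype ι]
    [DecidableEq ι] (v : ι → E) (r : R) : v ᵥ* algebraMap R (Matrix ι ι E) r = r • v := by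
  rw [Algebra.algebraMap_eq_smul_one, Matrix.vecMul_smul, Matrix.vecMul_one]

variable {E : Type*} [Semiring E] {g : ℕ → E} {m : ℕ}

lemma single_vecMul_descMatrix_of_lt {j : ℕ} {k : Fin (m + 1)} (a : E) (h : (k : ℕ) < j) :
    Pi.single k a ᵥ* descMatrix g m j = Pi.single k (a * g (j - 1)) := by
  simp [Matrix.single_vecMul, Matrix.row, descMatrix, h, ← Pi.single_smul]

lemma single_vecMul_descMatrix_self {j : ℕ} (a : E) (h : j < m + 1) :
    Pi.single ⟨j, h⟩ a ᵥ* descMatrix g m j = 0 := by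
  simp [Matrix.single_vecMul, Matrix.row, descMatrix]

lemma single_vecMul_descMatrix_succ {j : ℕ} (a : E) (h : j + 1 < m + 1) :
    Pi.single ⟨j + 1, h⟩ a ᵥ* descMatrix g m j = Pi.single ⟨j, by omega⟩ a := by
  simp [Matrix.single_vecMul, Matrix.row, descMatrix, ← Pi.single_smul]

lemma single_vecMul_descMatrix_of_gt {j : ℕ} {k : Fin (m + 1)} (a : E) (h : j + 1 < k) :
    Pi.single k a ᵥ* descMatrix g m j = Pi.single k (a * g j) := by
  simp [Matrix.single_vecMul, Matrix.row, descMatrix, show ¬ (k : ℕ) < j by omega,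
    show (k : ℕ) ≠ j by omega, h.ne', ← Pi.single_smul]

lemma IsNilCoxeterSeq.descMatrix_sq (hg : IsNilCoxeterSeq g) (m j : ℕ) :
    descMatrix g m j * descMatrix g m j = 0 := by
  refine Matrix.ext_of_single_vecMul fun ⟨k, hk⟩ => ?_
  rw [← Matrix.vecMul_vecMul, Matrix.vecMul_zero]
  obtain h | rfl | rfl | h : k < j ∨ k = j ∨ k = j + 1 ∨ j + 1 < k := by omega
  · rw [single_vecMul_descMatrix_of_lt _ h, single_vecMul_descMatrix_of_lt _ h, mul_assoc, hg.sq,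
      mul_zero, Pi.single_zero]
  · rw [single_vecMul_descMatrix_self, Matrix.zero_vecMul]
  · rw [single_vecMul_descMatrix_succ, single_vecMul_descMatrix_self]
  · rw [single_vecMul_descMatrix_of_gt _ h, single_vecMul_descMatrix_of_gt _ h, mul_assoc, hg.sq,
      mul_zero, Pi.single_zero]

lemma IsNilCoxeterSeq.commute_descMatrix (hg : IsNilCoxeterSeq g) (m : ℕ) {i j : ℕ}
    (hij : i + 1 < j) : Commute (descMatrix g m i) (descMatrix g m j) := by
  refine Matrix.ext_of_single_vecMul fun ⟨k, hk⟩ => ?_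
  simp only [← Matrix.vecMul_vecMul]
  obtain h | rfl | rfl | ⟨h, h'⟩ | rfl | rfl | h : k < i ∨ k = i ∨ k = i + 1 ∨
      (i + 1 < k ∧ k < j) ∨ k = j ∨ k = j + 1 ∨ j + 1 < k := by omega
  · have hj : k < j := by omega
    simp only [single_vecMul_descMatrix_of_lt, h, hj, mul_assoc,
      (hg.comm (i - 1) (j - 1) (by omega)).eq]
  · have hj : k < j := by omega
    simp only [single_vecMul_descMatrix_of_lt, single_vecMul_descMatrix_self, hj,
      Matrix.zero_vecMul]
  · have hj : i < j := by omega
    simp only [single_vecMul_descMatrix_of_lt, single_vecMul_descMatrix_succ, hij, hj]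
  · simp only [single_vecMul_descMatrix_of_gt, single_vecMul_descMatrix_of_lt, h, h', mul_assoc,
      (hg.comm i (j - 1) (by omega)).eq]
  · simp only [single_vecMul_descMatrix_of_gt, single_vecMul_descMatrix_self, hij,
      Matrix.zero_vecMul]
  · have hi : i + 1 < j + 1 := by omega
    simp only [single_vecMul_descMatrix_of_gt, single_vecMul_descMatrix_succ, hij, hi]
  · have hi : i + 1 < k := by omega
    simp only [single_vecMul_descMatrix_of_gt, h, hi, mul_assoc, (hg.comm i j hij).eq]

lemma IsNilCoxeterSeq.descMatrix_braid (hg : IsNilCoxeterSeq g) (m j : ℕ) :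
    descMatrix g m j * descMatrix g m (j + 1) * descMatrix g m j =
      descMatrix g m (j + 1) * descMatrix g m j * descMatrix g m (j + 1) := by
  refine Matrix.ext_of_single_vecMul fun ⟨k, hk⟩ => ?_
  simp only [← Matrix.vecMul_vecMul]
  obtain h | rfl | rfl | rfl | h : k < j ∨ k = j ∨ k = j + 1 ∨ k = j + 2 ∨ j + 2 < k := by omega
  · have hbraid := hg.braid (j - 1)
    rw [Nat.sub_add_cancel (by omega)] at hbraid
    have h' : k < j + 1 := by omega
    simp only [single_vecMul_descMatrix_of_lt, h, h', Nat.add_sub_cancel, mul_assoc] at hbraid ⊢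
    rw [hbraid]
  · simp only [single_vecMul_descMatrix_of_lt, single_vecMul_descMatrix_self, Nat.lt_succ_self,
      Matrix.zero_vecMul]
  · simp only [single_vecMul_descMatrix_of_lt, single_vecMul_descMatrix_succ,
      single_vecMul_descMatrix_self, Nat.lt_succ_self, Matrix.zero_vecMul]
  · simp only [single_vecMul_descMatrix_of_lt, single_vecMul_descMatrix_of_gt,
      single_vecMul_descMatrix_succ, Nat.lt_succ_self, Nat.add_sub_cancel]
  · have h' : j + 1 < k := by omega
    simp only [single_vecMul_descMatrix_of_gt, h, h', mul_assoc]
    simp only [← mul_assoc (g _), hg.braid]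

lemma IsNilCoxeterSeq.isNilCoxeterSeq_descMatrix (hg : IsNilCoxeterSeq g) (m : ℕ) :
    IsNilCoxeterSeq (descMatrix g m) where
  sq := hg.descMatrix_sq m
  comm _ _ := hg.commute_descMatrix m
  braid := hg.descMatrix_braid m

end DescMatrix

section BalancedTensorProduct

universe u

variable {A B X : Type*} {T : Type u}

/-- A biadditive map on `A × A` which is balanced over `B`, acting through `i : B → A`. -/
structure IsBalanced [Semiring A] [Semiring B] [AddCommMonoid X] (i : B →+* A)
    (f : A → A → X) : Prop where
  add_left : ∀ x x' y, f (x + x') y = f x y + f x' y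
  add_right : ∀ x y y', f x (y + y') = f x y + f x y'
  balanced : ∀ c x y, f (x * i c) y = f x (i c * y)

/-- `τ` exhibits `T` as the tensor product `A ⊗_B A` along `i : B → A`, that is, `τ` is the
universal balanced map. Mathlib only has tensor products over commutative rings. -/
structure IsBalancedTensorProduct [Semiring A] [Semiring B]
    [AddCommGroup T] (i : B →+* A) (τ : A → A → T) : Prop extends IsBalanced i τ where
  existsUnique_lift : ∀ (X : Type u) [AddCommGroup X] (f : A → A → X), IsBalanced i f →
    ∃! h : T →+ X, ∀ x y, h (τ x y) = f x y

lemma IsBalanced.comp [Semiring A] [Semiring B] [AddCommMonoid T] [AddCommMonoid X] {i : B →+* A}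
    {τ : A → A → T} (hτ : IsBalanced i τ) (h : T →+ X) : IsBalanced i fun x y => h (τ x y) where
  add_left x x' y := by rw [hτ.add_left, map_add]
  add_right x y y' := by rw [hτ.add_right, map_add]
  balanced c x y := by rw [hτ.balanced]

lemma IsBalanced.map_sum_right [Semiring A] [Semiring B] [AddCommGroup X] {i : B →+* A}
    {f : A → A → X} (hf : IsBalanced i f) {ι : Type*} (s : Finset ι) (x : A) (y : ι → A) :
    f x (∑ k ∈ s, y k) = ∑ k ∈ s, f x (y k) :=
  map_sum (AddMonoidHom.mk' (f x) (hf.add_right x)) y s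

lemma IsBalanced.neg_left [Ring A] [Semiring B] [AddCommGroup X] {i : B →+* A}
    {f : A → A → X} (hf : IsBalanced i f) (x y : A) : f (-x) y = -f x y :=
  map_neg (AddMonoidHom.mk' (f · y) (hf.add_left · · y)) x

namespace IsBalancedTensorProduct

lemma hom_ext {X : Type u} [Semiring A] [Semiring B] [AddCommGroup T] [AddCommGroup X]
    {i : B →+* A} {τ : A → A → T} (hτ : IsBalancedTensorProduct i τ) {f g : T →+ X}
    (h : ∀ x y, f (τ x y) = g (τ x y)) : f = g :=
  (hτ.existsUnique_lift X _ (hτ.comp g)).unique h fun _ _ => rfl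

lemma closure_eq_top [Semiring A] [Semiring B] [AddCommGroup T] {i : B →+* A} {τ : A → A → T}
    (hτ : IsBalancedTensorProduct i τ) :
    AddSubgroup.closure (Set.range (Function.uncurry τ)) = ⊤ := by
  have hmk : QuotientAddGroup.mk' (AddSubgroup.closure (Set.range (Function.uncurry τ))) = 0 :=
    hτ.hom_ext fun x y => (QuotientAddGroup.eq_zero_iff _).2
      (AddSubgroup.subset_closure ⟨(x, y), rfl⟩)
  rw [← QuotientAddGroup.ker_mk' (AddSubgroup.closure _), hmk, AddMonoidHom.ker_zero]

variable [Ring A] [Semiring B] [AddCommGroup T] {i : B →+* A} {τ : A → A → T}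

@[elab_as_elim]
lemma induction_on (hτ : IsBalancedTensorProduct i τ) {P : T → Prop} (t : T)
    (tmul : ∀ x y, P (τ x y)) (add : ∀ s t, P s → P t → P (s + t)) : P t := by
  have hzero : τ 0 0 = 0 := by simpa using hτ.add_left 0 0 0
  have ht : t ∈ AddSubgroup.closure (Set.range (Function.uncurry τ)) := by
    rw [hτ.closure_eq_top]; trivial
  induction ht using AddSubgroup.closure_induction_left with
  | zero => exact hzero ▸ tmul 0 0
  | add_left _ hx _ _ hy =>
    obtain ⟨⟨a, b⟩, rfl⟩ := hx
    exact add _ _ (tmul a b) hy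
  | neg_add_cancel _ hx _ _ hy =>
    obtain ⟨⟨a, b⟩, rfl⟩ := hx
    exact add _ _ (hτ.neg_left a b ▸ tmul (-a) b) hy

lemma exists_eq_sum (hτ : IsBalancedTensorProduct i τ) {ι : Type*} [Fintype ι] {d : ι → A}
    (hd : ∀ y, ∃ c : ι → B, ∑ k, i (c k) * d k = y) (t : T) :
    ∃ a : ι → A, ∑ k, τ (a k) (d k) = t := by
  induction t using hτ.induction_on with
  | tmul x y =>
    obtain ⟨c, rfl⟩ := hd y
    exact ⟨fun k => x * i (c k), by simp only [hτ.map_sum_right, hτ.balanced]⟩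
  | add s t hs ht =>
    obtain ⟨a, rfl⟩ := hs
    obtain ⟨b, rfl⟩ := ht
    exact ⟨a + b, by simp only [Pi.add_apply, hτ.add_left, Finset.sum_add_distrib]⟩

end IsBalancedTensorProduct

end BalancedTensorProduct

namespace NilCoxeter

variable (F : Type) [Field F]

/-- The generator `u_{k+1}` of `N_n`, extended by zero to all `k : ℕ`. -/
noncomputable def gen (n k : ℕ) : NilCoxeter F n :=
  if h : k < n - 1 then u F n ⟨k, h⟩ else 0

lemma gen_val (n : ℕ) (k : Fin (n - 1)) : gen F n k = u F n k := by
  simp [gen]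

lemma isNilCoxeterSeq_gen (n : ℕ) : IsNilCoxeterSeq (gen F n) where
  sq k := by
    unfold gen
    split_ifs with hk
    · simpa [u] using RingQuot.mkAlgHom_rel F (NilCoxeterRel.sq (F := F) ⟨k, hk⟩)
    · exact mul_zero 0
  comm k l hkl := by
    unfold gen
    split_ifs with hk hl
    · simpa [u, commute_iff_eq] using
        RingQuot.mkAlgHom_rel F (NilCoxeterRel.comm (F := F) ⟨k, hk⟩ ⟨l, hl⟩ (Or.inl hkl))
    all_goals simp
  braid k := by
    unfold gen
    split_ifs with hk hl
    · simpa [u] using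
        RingQuot.mkAlgHom_rel F (NilCoxeterRel.braid (F := F) ⟨k, hk⟩ ⟨k + 1, hl⟩ rfl)
    all_goals simp

variable {F}

section Lift

variable {n : ℕ} {E : Type*} [Semiring E] [Algebra F E] {g : ℕ → E}

/-- The algebra map out of `N_n` sending the generators to a sequence satisfying the nilcoxeter
relations. -/
noncomputable def lift (n : ℕ) (hg : IsNilCoxeterSeq g) : NilCoxeter F n →ₐ[F] E :=
  RingQuot.liftAlgHom F ⟨FreeAlgebra.lift F fun k : Fin (n - 1) => g k, by
    rintro x y (⟨i⟩ | ⟨i, j, h⟩ | ⟨i, j, h⟩) <;>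
      simp only [map_mul, map_zero, FreeAlgebra.lift_ι_apply]
    · exact hg.sq i
    · exact h.elim (fun h => (hg.comm i j h).eq) fun h => (hg.comm j i h).eq.symm
    · rw [h, hg.braid]⟩

lemma lift_gen (hg : IsNilCoxeterSeq g) {k : ℕ} (h : k < n - 1) :
    lift n hg (gen F n k) = g k := by
  simp only [lift, gen, h, dif_pos, u, RingQuot.liftAlgHom_mkAlgHom_apply,
    FreeAlgebra.lift_ι_apply]

end Lift

lemma incl_gen {n k : ℕ} (h : k < n - 1) : incl F n (gen F n k) = gen F (n + 1) k := by
  simp only [gen, h, (by omega : k < n + 1 - 1), dif_pos, incl, u,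
    RingQuot.liftAlgHom_mkAlgHom_apply, FreeAlgebra.lift_ι_apply, Fin.castLE_mk]

@[elab_as_elim]
lemma induction_on {n : ℕ} {P : NilCoxeter F n → Prop} (x : NilCoxeter F n)
    (algebraMap : ∀ r, P (algebraMap F _ r)) (gen : ∀ k < n - 1, P (gen F n k))
    (mul : ∀ x y, P x → P y → P (x * y)) (add : ∀ x y, P x → P y → P (x + y)) : P x := by
  obtain ⟨x, rfl⟩ := RingQuot.mkAlgHom_surjective F (NilCoxeterRel F n) x
  induction x using FreeAlgebra.induction with
  | grade0 r => simpa using algebraMap r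
  | grade1 k => simpa only [gen_val, u] using gen k k.2
  | mul a b ha hb => simpa using mul _ _ ha hb
  | add a b ha hb => simpa using add _ _ ha hb

lemma commute_gen_incl_incl {n : ℕ} (c : NilCoxeter F n) :
    Commute (gen F (n + 2) n) (incl F (n + 1) (incl F n c)) := by
  induction c using induction_on with
  | algebraMap r =>
    rw [AlgHom.commutes, AlgHom.commutes]
    exact Algebra.commute_algebraMap_right r _
  | gen k hk =>
    rw [incl_gen hk, incl_gen (by omega)]
    exact ((isNilCoxeterSeq_gen F (n + 2)).comm k n (by omega)).symm
  | mul x y hx hy => simpa using hx.mul_right hy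
  | add x y hx hy => simpa using hx.add_right hy

variable (F) in
/-- The representatives `u_m ⋯ u_{k+1}`, `0 ≤ k ≤ m`, of the right cosets of `S_m` in `S_{m+1}`,
as elements of `N_{m+1}`. -/
noncomputable def cosetWord (m k : ℕ) : NilCoxeter F (m + 1) := descWord (gen F (m + 1)) m k

lemma cosetWord_self (m : ℕ) : cosetWord F m m = 1 := descWord_self _ m

lemma cosetWord_succ {m k : ℕ} (h : k ≤ m) :
    cosetWord F (m + 1) k = gen F (m + 2) m * incl F (m + 1) (cosetWord F m k) := by
  rw [cosetWord, cosetWord, descWord_succ_left _ h, map_descWord _ fun j hj => incl_gen (by omega)]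

variable (F) in
/-- The left `N_m`-linear map from `N_m ^ (m + 1)` to `N_{m+1}` sending the standard basis to the
coset representatives. -/
noncomputable def cosetSum (m : ℕ) : (Fin (m + 1) → NilCoxeter F m) →ₗ[F] NilCoxeter F (m + 1) :=
  ∑ k : Fin (m + 1),
    LinearMap.mulRight F (cosetWord F m k) ∘ₗ (incl F m).toLinearMap ∘ₗ LinearMap.proj k

lemma cosetSum_apply {m : ℕ} (v : Fin (m + 1) → NilCoxeter F m) :
    cosetSum F m v = ∑ k, incl F m (v k) * cosetWord F m k := by
  simp [cosetSum]

lemma cosetSum_single {m : ℕ} (k : Fin (m + 1)) (a : NilCoxeter F m) :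
    cosetSum F m (Pi.single k a) = incl F m a * cosetWord F m k := by
  rw [cosetSum_apply, Finset.sum_eq_single k] <;> simp +contextual

open scoped Matrix

lemma cosetSum_single_vecMul_descMatrix {m j : ℕ} (hj : j < m) (k : Fin (m + 1))
    (a : NilCoxeter F m) :
    cosetSum F m (Pi.single k a ᵥ* descMatrix (gen F m) m j) =
      cosetSum F m (Pi.single k a) * gen F (m + 1) j := by
  have hg := isNilCoxeterSeq_gen F (m + 1)
  obtain ⟨k, hk⟩ := k
  obtain h | rfl | rfl | h : k < j ∨ k = j ∨ k = j + 1 ∨ j + 1 < k := by omega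
  · obtain ⟨j, rfl⟩ := Nat.exists_eq_add_one_of_ne_zero (by omega : j ≠ 0)
    simp only [single_vecMul_descMatrix_of_lt, h, cosetSum_single, Nat.add_sub_cancel, map_mul,
      incl_gen (by omega : j < m - 1), cosetWord, mul_assoc,
      hg.descWord_mul_of_lt (Nat.le_of_lt_succ h) hj]
  · simp only [single_vecMul_descMatrix_self, cosetSum_single, cosetWord, mul_assoc,
      hg.descWord_mul_self hj, map_zero, mul_zero]
  · simp only [single_vecMul_descMatrix_succ, cosetSum_single, cosetWord, mul_assoc,
      descWord_succ_right _ hj]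
  · simp only [single_vecMul_descMatrix_of_gt, h, cosetSum_single, map_mul,
      incl_gen (by omega : j < m - 1), cosetWord, mul_assoc, hg.descWord_mul_of_gt m h]

lemma cosetSum_vecMul_descMatrix {m j : ℕ} (hj : j < m) (v : Fin (m + 1) → NilCoxeter F m) :
    cosetSum F m (v ᵥ* descMatrix (gen F m) m j) = cosetSum F m v * gen F (m + 1) j := by
  rw [← Finset.univ_sum_single v, Matrix.sum_vecMul, map_sum, map_sum, Finset.sum_mul]
  exact Finset.sum_congr rfl fun k _ => cosetSum_single_vecMul_descMatrix hj k (v k)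

variable (F) in
/-- The right action of `N_{m+1}` on the left `N_m`-module `N_m ^ (m + 1)` of coefficient vectors,
by matrices acting on row vectors. -/
noncomputable def cosetRep (m : ℕ) :
    NilCoxeter F (m + 1) →ₐ[F] Matrix (Fin (m + 1)) (Fin (m + 1)) (NilCoxeter F m) :=
  lift (m + 1) ((isNilCoxeterSeq_gen F m).isNilCoxeterSeq_descMatrix m)

lemma cosetRep_gen {m j : ℕ} (hj : j < m) :
    cosetRep F m (gen F (m + 1) j) = descMatrix (gen F m) m j :=
  lift_gen _ hj

lemma cosetSum_vecMul_cosetRep {m : ℕ} (w : NilCoxeter F (m + 1)) :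
    ∀ v, cosetSum F m (v ᵥ* cosetRep F m w) = cosetSum F m v * w := by
  induction w using induction_on with
  | algebraMap r =>
    intro v
    rw [AlgHom.commutes, vecMul_algebraMap, map_smul, ← Algebra.commutes, ← Algebra.smul_def]
  | gen j hj =>
    rw [Nat.add_sub_cancel] at hj
    exact fun v => by rw [cosetRep_gen hj, cosetSum_vecMul_descMatrix hj]
  | mul x y hx hy => exact fun v => by rw [map_mul, ← Matrix.vecMul_vecMul, hy, hx, mul_assoc]
  | add x y hx hy => exact fun v => by rw [map_add, Matrix.vecMul_add, map_add, hx, hy, mul_add]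

lemma single_last_vecMul_cosetRep_incl {m : ℕ} (a : NilCoxeter F m) :
    ∀ b, Pi.single (Fin.last m) b ᵥ* cosetRep F m (incl F m a) =
      Pi.single (Fin.last m) (b * a) := by
  induction a using induction_on with
  | algebraMap r =>
    intro b
    rw [AlgHom.commutes, AlgHom.commutes, vecMul_algebraMap, ← Pi.single_smul, ← Algebra.commutes,
      ← Algebra.smul_def]
  | gen j hj =>
    intro b
    rw [incl_gen hj, cosetRep_gen (by omega), single_vecMul_descMatrix_of_gt]
    simp only [Fin.val_last]
    omega
  | mul x y hx hy =>
    exact fun b => by rw [map_mul, map_mul, ← Matrix.vecMul_vecMul, hx, hy, mul_assoc]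
  | add x y hx hy =>
    exact fun b => by rw [map_add, map_add, Matrix.vecMul_add, hx, hy, mul_add, Pi.single_add]

lemma single_last_vecMul_cosetRep_cosetWord {m : ℕ} (a : NilCoxeter F m) (k : Fin (m + 1)) :
    Pi.single (Fin.last m) a ᵥ* cosetRep F m (cosetWord F m k) = Pi.single k a := by
  induction k using Fin.reverseInduction with
  | last => rw [Fin.val_last, cosetWord_self, map_one, Matrix.vecMul_one]
  | cast k ih =>
    rw [cosetWord, Fin.val_castSucc, descWord_succ_right _ k.2, map_mul, ← Matrix.vecMul_vecMul,
      cosetRep_gen k.2]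
    exact (congrArg (· ᵥ* _) ih).trans (single_vecMul_descMatrix_succ a _)

lemma single_last_vecMul_cosetRep_cosetSum {m : ℕ} (v : Fin (m + 1) → NilCoxeter F m) :
    Pi.single (Fin.last m) 1 ᵥ* cosetRep F m (cosetSum F m v) = v := by
  rw [cosetSum_apply, map_sum, Matrix.vecMul_sum]
  simp only [map_mul, ← Matrix.vecMul_vecMul, single_last_vecMul_cosetRep_incl, one_mul,
    single_last_vecMul_cosetRep_cosetWord, Finset.univ_sum_single]

theorem cosetSum_bijective (m : ℕ) : Function.Bijective (cosetSum F m) :=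
  Function.bijective_iff_has_inverse.2
    ⟨fun w => Pi.single (Fin.last m) 1 ᵥ* cosetRep F m w, single_last_vecMul_cosetRep_cosetSum,
      fun w => by
        rw [cosetSum_vecMul_cosetRep, cosetSum_single, map_one, Fin.val_last, cosetWord_self,
          one_mul, one_mul]⟩

section Bimodule

variable {n : ℕ}

lemma isBalanced_incl_mul_gen_mul_incl (n : ℕ) :
    IsBalanced (incl F n : NilCoxeter F n →+* NilCoxeter F (n + 1))
      fun a b => incl F (n + 1) a * gen F (n + 2) n * incl F (n + 1) b where
  add_left a a' b := by simp only [map_add, add_mul]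
  add_right a b b' := by simp only [map_add, mul_add]
  balanced c a b := by
    simp only [RingHom.coe_coe, map_mul, mul_assoc, (commute_gen_incl_incl c).left_comm]

variable {T : Type} [AddCommGroup T] {τ : NilCoxeter F (n + 1) → NilCoxeter F (n + 1) → T}
  {g : T →+ NilCoxeter F (n + 2)}

lemma coprod_incl_bijective
    (hτ : IsBalancedTensorProduct (incl F n : NilCoxeter F n →+* NilCoxeter F (n + 1)) τ)
    (hg : ∀ a b, g (τ a b) = incl F (n + 1) a * gen F (n + 2) n * incl F (n + 1) b) :
    Function.Bijective
      (g.coprod (incl F (n + 1) : NilCoxeter F (n + 1) →+ NilCoxeter F (n + 2))) := by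
  set e := g.coprod (incl F (n + 1) : NilCoxeter F (n + 1) →+ NilCoxeter F (n + 2))
  let f : (Fin (n + 2) → NilCoxeter F (n + 1)) → T × NilCoxeter F (n + 1) := fun v =>
    (∑ k : Fin (n + 1), τ (v k.castSucc) (cosetWord F n k), v (Fin.last (n + 1)))
  have hef : e ∘ f = cosetSum F (n + 1) := by
    funext v
    simp [e, f, cosetSum_apply, Fin.sum_univ_castSucc (n := n + 1), hg, mul_assoc,
      cosetWord_succ (Nat.le_of_lt_succ (Fin.is_lt _)), cosetWord_self]
  have hf : Function.Surjective f := by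
    rintro ⟨t, x⟩
    obtain ⟨a, rfl⟩ := hτ.exists_eq_sum (d := fun k : Fin (n + 1) => cosetWord F n k)
      (fun y => by simpa only [cosetSum_apply, RingHom.coe_coe] using (cosetSum_bijective n).2 y) t
    exact ⟨Fin.snoc (α := fun _ => NilCoxeter F (n + 1)) a x, by simp [f]⟩
  have hbij : Function.Bijective (e ∘ f) := hef ▸ cosetSum_bijective (n + 1)
  exact ⟨hbij.1.of_comp_right hf, hbij.2.of_comp⟩

end Bimodule

end NilCoxeter

/-- For each `n ≥ 1` (written here as `n + 1`), there is an isomorphism of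
`(N_{n+1}, N_{n+1})`-bimodules `N_{n+2} ≅ (N_{n+1} ⊗_{N_n} N_{n+1}) ⊕ N_{n+1}`, where the
summand `N_{n+1}` maps in via the inclusion and the summand `N_{n+1} ⊗_{N_n} N_{n+1}`
maps in via `a ⊗ b ↦ a u_{n+1} b`.  The tensor product `T = N_{n+1} ⊗_{N_n} N_{n+1}` is
described by its universal property: `τ` is the canonical balanced biadditive map, with
left and right `N_{n+1}`-actions as indicated. -/
theorem stmt_12 (F : Type) [Field F] (n : ℕ)
    (T : Type) [AddCommGroup T] [Module (NilCoxeter F (n + 1)) T]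
    [Module (NilCoxeter F (n + 1))ᵐᵒᵖ T]
    [SMulCommClass (NilCoxeter F (n + 1)) (NilCoxeter F (n + 1))ᵐᵒᵖ T]
    (τ : NilCoxeter F (n + 1) → NilCoxeter F (n + 1) → T)
    (hadd₁ : ∀ x x' y, τ (x + x') y = τ x y + τ x' y)
    (hadd₂ : ∀ x y y', τ x (y + y') = τ x y + τ x y')
    (hbal : ∀ (c : NilCoxeter F n) x y,
      τ (x * NilCoxeter.incl F n c) y = τ x (NilCoxeter.incl F n c * y))
    (hleft : ∀ (a : NilCoxeter F (n + 1)) x y, a • τ x y = τ (a * x) y)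
    (hright : ∀ (a : NilCoxeter F (n + 1)) x y,
      MulOpposite.op a • τ x y = τ x (y * a))
    (huniv : ∀ (X : Type) [AddCommGroup X]
      (f : NilCoxeter F (n + 1) → NilCoxeter F (n + 1) → X),
      (∀ x x' y, f (x + x') y = f x y + f x' y) →
      (∀ x y y', f x (y + y') = f x y + f x y') →
      (∀ (c : NilCoxeter F n) x y,
        f (x * NilCoxeter.incl F n c) y = f x (NilCoxeter.incl F n c * y)) →
      ∃! h : T →+ X, ∀ x y, h (τ x y) = f x y) :
    ∃ e : T × NilCoxeter F (n + 1) ≃+ NilCoxeter F (n + 2),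
      (∀ (a : NilCoxeter F (n + 1)) (t : T) (x : NilCoxeter F (n + 1)),
        e (a • t, a * x) = NilCoxeter.incl F (n + 1) a * e (t, x)) ∧
      (∀ (a : NilCoxeter F (n + 1)) (t : T) (x : NilCoxeter F (n + 1)),
        e (MulOpposite.op a • t, x * a) = e (t, x) * NilCoxeter.incl F (n + 1) a) ∧
      (∀ x : NilCoxeter F (n + 1), e (0, x) = NilCoxeter.incl F (n + 1) x) ∧
      (∀ a b : NilCoxeter F (n + 1),
        e (τ a b, 0) = NilCoxeter.incl F (n + 1) a *
          NilCoxeter.u F (n + 2) (Fin.last n) * NilCoxeter.incl F (n + 1) b) := by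
  have hτ : IsBalancedTensorProduct
      (NilCoxeter.incl F n : NilCoxeter F n →+* NilCoxeter F (n + 1)) τ :=
    ⟨⟨hadd₁, hadd₂, hbal⟩, fun X _ f hf => huniv X f hf.add_left hf.add_right hf.balanced⟩
  obtain ⟨g, hg, -⟩ :=
    hτ.existsUnique_lift _ _ (NilCoxeter.isBalanced_incl_mul_gen_mul_incl n)
  have hg_left (a t) : g (a • t) = NilCoxeter.incl F (n + 1) a * g t := by
    induction t using hτ.induction_on with
    | tmul x y => simp only [hleft, hg, map_mul, mul_assoc]
    | add s t hs ht => rw [smul_add, map_add, map_add, mul_add, hs, ht]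
  have hg_right (a t) : g (MulOpposite.op a • t) = g t * NilCoxeter.incl F (n + 1) a := by
    induction t using hτ.induction_on with
    | tmul x y => simp only [hright, hg, map_mul, mul_assoc]
    | add s t hs ht => rw [smul_add, map_add, map_add, add_mul, hs, ht]
  refine ⟨AddEquiv.ofBijective _ (NilCoxeter.coprod_incl_bijective hτ hg), ?_, ?_, ?_, ?_⟩
  · intro a t x
    simp [hg_left, mul_add]
  · intro a t x
    simp [hg_right, add_mul]
  · intro x
    simp
  · intro a b
    simp [hg, ← NilCoxeter.gen_val]
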